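/- Let G be a finite set of labeled polynomials containing f_i^[e_i] for every i = 1,...,m, and let f^[u] be a labeled polynomial (f = u·f⃗). If for every critical pair (x^{t_g}, g^[v], x^{t_h}, h^[w]) of two elements of G with s(x^{t_g} v) ⪯₂ s(u), the S-polynomial of that pair has a standard representation w.r.t. G, then f^[u] has a standard representation w.r.t. G. -/

import Mathlib

open MvPolynomial

noncomputable section

variable {k : Type*} [Field k] {m n : ℕ}

/-- The leading power product of a polynomial, w.r.t. the monomial order `L1`;
`⊥` for the zero polynomial. -/
def lpp (L1 : LinearOrder (Fin n →₀ ℕ)) (f : MvPolynomial (Fin n) k) :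
    WithBot (Fin n →₀ ℕ) :=
  @Finset.max _ L1 f.support

/-- The leading coefficient of a polynomial w.r.t. the monomial order `L1`. -/
def plc (L1 : LinearOrder (Fin n →₀ ℕ)) (f : MvPolynomial (Fin n) k) : k :=
  WithBot.recBotCoe 0 (fun α => MvPolynomial.coeff α f) (lpp L1 f)

/-- The support of a module element `u ∈ R^m`, as a set of module monomials `(i, α)`. -/
def msupport (u : Fin m → MvPolynomial (Fin n) k) : Finset (Fin m × (Fin n →₀ ℕ)) :=
  Finset.univ.biUnion fun i => (u i).support.image fun α => (i, α)

/-- The signature of a module element, w.r.t. the module term order `L2`;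
`⊥` for the zero element. -/
def sig (L2 : LinearOrder (Fin m × (Fin n →₀ ℕ))) (u : Fin m → MvPolynomial (Fin n) k) :
    WithBot (Fin m × (Fin n →₀ ℕ)) :=
  @Finset.max _ L2 (msupport u)

/-- The leading coefficient of a module element (the coefficient at its signature). -/
def mlc (L2 : LinearOrder (Fin m × (Fin n →₀ ℕ))) (u : Fin m → MvPolynomial (Fin n) k) : k :=
  WithBot.recBotCoe 0 (fun p => MvPolynomial.coeff p.2 (u p.1)) (sig L2 u)

/-- The strict order on `WithBot β` induced by a linear order `L` on `β`
(`⊥` smaller than everything). -/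
def bslt {β : Type*} (L : LinearOrder β) (a b : WithBot β) : Prop :=
  WithBot.recBotCoe False (fun y => WithBot.recBotCoe True (fun x => L.lt x y) a) b

/-- The order on `WithBot β` induced by a linear order `L` on `β`. -/
def bsle {β : Type*} (L : LinearOrder β) (a b : WithBot β) : Prop :=
  WithBot.recBotCoe (a = ⊥) (fun y => WithBot.recBotCoe True (fun x => L.le x y) a) b

/-- Multiplication of a module element by the monomial `x^t`. -/
def tsmul (t : Fin n →₀ ℕ) (u : Fin m → MvPolynomial (Fin n) k) :
    Fin m → MvPolynomial (Fin n) k :=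
  fun i => monomial t (1 : k) * u i

/-- `u ⬝ f⃗ = u₁ f₁ + ⋯ + u_m f_m`. -/
def dotf (fvec u : Fin m → MvPolynomial (Fin n) k) : MvPolynomial (Fin n) k :=
  ∑ i, u i * fvec i

/-- The least common multiple of two monomials (componentwise max of exponents). -/
def mlcm (α β : Fin n →₀ ℕ) : Fin n →₀ ℕ :=
  Finsupp.zipWith max (max_self 0) α β

/-- `G` is a labeled Gröbner basis of `(f₁, …, f_m)`. -/
def IsLabeledGB (L1 : LinearOrder (Fin n →₀ ℕ)) (L2 : LinearOrder (Fin m × (Fin n →₀ ℕ)))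
    (fvec : Fin m → MvPolynomial (Fin n) k)
    (G : Set (MvPolynomial (Fin n) k × (Fin m → MvPolynomial (Fin n) k))) : Prop :=
  ∀ (f : MvPolynomial (Fin n) k) (u : Fin m → MvPolynomial (Fin n) k),
    f = dotf fvec u → f ≠ 0 →
      ∃ gv ∈ G, gv.1 ≠ 0 ∧ ∃ t : Fin n →₀ ℕ,
        WithBot.map (fun β => t + β) (lpp L1 gv.1) = lpp L1 f ∧
        bsle L2 (sig L2 (tsmul t gv.2)) (sig L2 u)

/-- `f^[u]` has a standard representation w.r.t. the set `B` of labeled polynomials. -/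
def HasStdRep (L1 : LinearOrder (Fin n →₀ ℕ)) (L2 : LinearOrder (Fin m × (Fin n →₀ ℕ)))
    (B : Set (MvPolynomial (Fin n) k × (Fin m → MvPolynomial (Fin n) k)))
    (f : MvPolynomial (Fin n) k) (u : Fin m → MvPolynomial (Fin n) k) : Prop :=
  ∃ (N : ℕ) (p : Fin N → MvPolynomial (Fin n) k)
      (g : Fin N → MvPolynomial (Fin n) k × (Fin m → MvPolynomial (Fin n) k)),
    (∀ i, g i ∈ B) ∧ f = ∑ i, p i * (g i).1 ∧
    (∀ i, bsle L1 (lpp L1 (p i * (g i).1)) (lpp L1 f)) ∧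
    (∀ i, bsle L2 (sig L2 (fun j => p i * (g i).2 j)) (sig L2 u))

/-- The polynomial part of the S-polynomial of the critical pair `(x^tg, gv, x^th, hw)`. -/
def spolyP (L1 : LinearOrder (Fin n →₀ ℕ))
    (gv hw : MvPolynomial (Fin n) k × (Fin m → MvPolynomial (Fin n) k))
    (tg th : Fin n →₀ ℕ) : MvPolynomial (Fin n) k :=
  monomial tg (1 : k) * gv.1 - C (plc L1 gv.1 / plc L1 hw.1) * (monomial th (1 : k) * hw.1)

/-- The module part of the S-polynomial of the critical pair `(x^tg, gv, x^th, hw)`. -/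
def spolyV (L1 : LinearOrder (Fin n →₀ ℕ))
    (gv hw : MvPolynomial (Fin n) k × (Fin m → MvPolynomial (Fin n) k))
    (tg th : Fin n →₀ ℕ) : Fin m → MvPolynomial (Fin n) k :=
  fun j =>
    monomial tg (1 : k) * gv.2 j - C (plc L1 gv.1 / plc L1 hw.1) * (monomial th (1 : k) * hw.2 j)

/-- `f^[u]` is reducible (in one step, by a one-side-reduction) by the set `G`
of labeled polynomials. -/
def Reducible (L1 : LinearOrder (Fin n →₀ ℕ)) (L2 : LinearOrder (Fin m × (Fin n →₀ ℕ)))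
    (G : Set (MvPolynomial (Fin n) k × (Fin m → MvPolynomial (Fin n) k)))
    (f : MvPolynomial (Fin n) k) (u : Fin m → MvPolynomial (Fin n) k) : Prop :=
  f ≠ 0 ∧ ∃ hw ∈ G, hw.1 ≠ 0 ∧ ∃ t : Fin n →₀ ℕ,
    WithBot.map (fun β => t + β) (lpp L1 hw.1) = lpp L1 f ∧
    bslt L2 (sig L2 (tsmul t hw.2)) (sig L2 u)

/-- `x^t ⬝ fu` is generalized rewritable by the finite set `B` (w.r.t. the strict partial
order `r` on labeled polynomials). -/
def GenRewritable (L2 : LinearOrder (Fin m × (Fin n →₀ ℕ)))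
    (B : Finset (MvPolynomial (Fin n) k × (Fin m → MvPolynomial (Fin n) k)))
    (r : (MvPolynomial (Fin n) k × (Fin m → MvPolynomial (Fin n) k)) →
         (MvPolynomial (Fin n) k × (Fin m → MvPolynomial (Fin n) k)) → Prop)
    (t : Fin n →₀ ℕ)
    (fu : MvPolynomial (Fin n) k × (Fin m → MvPolynomial (Fin n) k)) : Prop :=
  ∃ gv ∈ B, gv.2 ≠ 0 ∧
    (∃ pq qq : Fin m × (Fin n →₀ ℕ), sig L2 gv.2 = ↑pq ∧ sig L2 fu.2 = ↑qq ∧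
      pq.1 = qq.1 ∧ ∃ γ : Fin n →₀ ℕ, pq.2 + γ = t + qq.2) ∧
    r gv fu

/-- The position-over-term module order: `(i, α) ≺ (j, β)` iff `i > j`,
or `i = j` and `α ≺₁ β`. -/
def potLT (L1 : LinearOrder (Fin n →₀ ℕ)) (p q : Fin m × (Fin n →₀ ℕ)) : Prop :=
  q.1 < p.1 ∨ (p.1 = q.1 ∧ L1.lt p.2 q.2)

/-- `p` is the signature of the module element `w` w.r.t. the linear order `lt`
on module monomials. -/
def IsSigWrt (lt : (Fin m × (Fin n →₀ ℕ)) → (Fin m × (Fin n →₀ ℕ)) → Prop)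
    (w : Fin m → MvPolynomial (Fin n) k) (p : Fin m × (Fin n →₀ ℕ)) : Prop :=
  p ∈ msupport w ∧ ∀ q ∈ msupport w, q ≠ p → lt q p

end

/-!
Write `f` as a `k`-linear combination of monomial multiples `x^t g`, `g^[v] ∈ G`, with
`s(x^t v) ⪯₂ s(u)`; such expressions exist because `G` contains every `f_i^[e_i]`. Among them choose
one whose largest leading monomial `δ` is minimal. If `lpp(f) ≺₁ δ`, the terms of degree `δ` cancel,
so their sum is a combination of S-polynomials of pairs `x^s g`, `x^t h` of that degree. Such an
S-polynomial is a monomial multiple of the S-polynomial of the critical pair of `g` and `h`. The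
signature of this multiple of the critical pair is still at most `s(u)`, and multiplying by
monomials preserves signature bounds, so the assumed standard representation rewrites it in terms of
multiples of smaller degree with signature at most `s(u)`, contradicting the minimality of `δ`.
-/

section DegreeSpan

variable {σ k : Type*} [Field k]

/-- The degree of a polynomial in the linearly ordered type `WithBot ord.syn`, in which degrees are
compared; it is `⊥` for the zero polynomial. -/
noncomputable abbrev synDegree (ord : MonomialOrder σ) (p : MvPolynomial σ k) : WithBot ord.syn :=
  ord.toWithBotSyn (ord.withBotDegree p)

/-- The `k`-span of those elements of `M` whose degree lies in `s`. -/
noncomputable def degreeSpan (ord : MonomialOrder σ) (M : Set (MvPolynomial σ k))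
    (s : Set (WithBot ord.syn)) : Submodule k (MvPolynomial σ k) :=
  Submodule.span k {p ∈ M | synDegree ord p ∈ s}

variable {ord : MonomialOrder σ} {M : Set (MvPolynomial σ k)}

lemma degreeSpan_mono {s t : Set (WithBot ord.syn)} (h : s ⊆ t) :
    degreeSpan ord M s ≤ degreeSpan ord M t :=
  Submodule.span_mono fun _ hp => ⟨hp.1, h hp.2⟩

lemma exists_mem_degreeSpan_Iic {s : Set (WithBot ord.syn)} (hs : s.Nonempty)
    {f : MvPolynomial σ k} (hf : f ∈ degreeSpan ord M s) :
    ∃ δ ∈ s, f ∈ degreeSpan ord M (Set.Iic δ) := by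
  induction hf using Submodule.span_induction with
  | mem p hp => exact ⟨_, hp.2, Submodule.subset_span ⟨hp.1, Set.self_mem_Iic⟩⟩
  | zero => exact ⟨_, hs.some_mem, zero_mem _⟩
  | add p q _ _ hp hq =>
    obtain ⟨δ, hδ, hp⟩ := hp
    obtain ⟨ε, hε, hq⟩ := hq
    refine ⟨δ ⊔ ε, by rcases max_choice δ ε with h | h <;> rwa [h], add_mem ?_ ?_⟩
    · exact degreeSpan_mono (Set.Iic_subset_Iic.2 le_sup_left) hp
    · exact degreeSpan_mono (Set.Iic_subset_Iic.2 le_sup_right) hq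
  | smul c p _ hp =>
    obtain ⟨δ, hδ, hp⟩ := hp
    exact ⟨δ, hδ, Submodule.smul_mem _ c hp⟩

lemma coeff_degree_eq_zero_of_mem_degreeSpan_Iio {f h : MvPolynomial σ k}
    (hf : f ∈ degreeSpan ord M (Set.Iio (synDegree ord h))) :
    coeff (ord.degree h) f = 0 := by
  suffices degreeSpan ord M (Set.Iio (synDegree ord h)) ≤
      LinearMap.ker (lcoeff k (ord.degree h)) from this hf
  refine Submodule.span_le.2 fun p hp => ?_
  rcases (ord.withBotDegree_lt_withBotDegree_iff p h).1 hp.2 with hlt | ⟨rfl, -⟩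
  · exact ord.coeff_eq_zero_of_lt hlt
  · exact zero_mem _

lemma synDegree_monomial_le_of_mem_support {p : MvPolynomial σ k} {t : σ →₀ ℕ} (ht : t ∈ p.support)
    (c : k) : synDegree ord (monomial t c) ≤ synDegree ord p :=
  ord.withBotDegree_le_withBotDegree_of_support_subset
    (support_monomial_subset.trans (Finset.singleton_subset_iff.2 ht))

lemma synDegree_sPolynomial_lt {g h : MvPolynomial σ k} (hg : g ≠ 0)
    (hdeg : ord.degree g = ord.degree h) :
    synDegree ord (ord.sPolynomial g h) < synDegree ord g := by
  refine (ord.withBotDegree_lt_withBotDegree_iff _ _).2 ?_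
  rcases eq_or_ne (ord.sPolynomial g h) 0 with h0 | h0
  · exact Or.inr ⟨h0, hg⟩
  · exact Or.inl (ord.sPolynomial_lt_of_degree_ne_zero_of_degree_eq hdeg h0)

lemma eq_C_mul_add_C_mul_sPolynomial {p h : MvPolynomial σ k} (hh : h ≠ 0)
    (hdeg : ord.degree p = ord.degree h) :
    p = C (ord.leadingCoeff p / ord.leadingCoeff h) * h +
      C (ord.leadingCoeff h)⁻¹ * ord.sPolynomial p h := by
  have hlc : (C (ord.leadingCoeff h)⁻¹ : MvPolynomial σ k) * C (ord.leadingCoeff h) = 1 := by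
    rw [← C_mul, inv_mul_cancel₀ (ord.leadingCoeff_ne_zero_iff.2 hh), C_1]
  rw [ord.sPolynomial_def, hdeg, sup_idem, tsub_self, monomial_zero', div_eq_mul_inv, C_mul]
  linear_combination -p * hlc

/-- `M` satisfies Buchberger's condition: S-polynomials of elements of equal degree rewrite in
terms of elements of strictly smaller degree. -/
def SPolynomialsDescend (ord : MonomialOrder σ) (M : Set (MvPolynomial σ k)) : Prop :=
  ∀ ⦃g⦄, g ∈ M → ∀ ⦃h⦄, h ∈ M → g ≠ 0 → h ≠ 0 → ord.degree g = ord.degree h →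
    ord.sPolynomial g h ∈ degreeSpan ord M (Set.Iio (synDegree ord g))

lemma SPolynomialsDescend.exists_sub_C_mul_mem (hM : SPolynomialsDescend ord M)
    {h : MvPolynomial σ k} (hh : h ∈ M) {f : MvPolynomial σ k}
    (hf : f ∈ degreeSpan ord M (Set.Iic (synDegree ord h))) :
    ∃ c : k, f - C c * h ∈ degreeSpan ord M (Set.Iio (synDegree ord h)) := by
  induction hf using Submodule.span_induction with
  | mem p hp =>
    rcases (Set.mem_Iic.1 hp.2).lt_or_eq with hlt | heq
    · refine ⟨0, ?_⟩
      rw [C_0, zero_mul, sub_zero]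
      exact Submodule.subset_span ⟨hp.1, hlt⟩
    obtain ⟨hdeg, hzero⟩ :=
      (ord.withBotDegree_eq_withBotDegree_iff p h).1 (ord.toWithBotSyn.injective heq)
    rcases eq_or_ne h 0 with rfl | h0
    · exact ⟨0, by simp [hzero.2 rfl]⟩
    refine ⟨ord.leadingCoeff p / ord.leadingCoeff h, ?_⟩
    rw [sub_eq_of_eq_add' (eq_C_mul_add_C_mul_sPolynomial h0 hdeg), ← heq, ← smul_eq_C_mul]
    exact Submodule.smul_mem _ _ (hM hp.1 hh (mt hzero.1 h0) h0 hdeg)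
  | zero => exact ⟨0, by simp⟩
  | add p q _ _ hp hq =>
    obtain ⟨a, ha⟩ := hp
    obtain ⟨b, hb⟩ := hq
    exact ⟨a + b, by rw [C_add, add_mul, add_sub_add_comm]; exact add_mem ha hb⟩
  | smul c p _ hp =>
    obtain ⟨a, ha⟩ := hp
    exact ⟨c * a, by
      rw [C_mul, mul_assoc, ← smul_eq_C_mul, ← smul_sub]; exact Submodule.smul_mem _ c ha⟩

lemma SPolynomialsDescend.mem_degreeSpan_Iio (hM : SPolynomialsDescend ord M)
    {f : MvPolynomial σ k} {δ : WithBot ord.syn} (hδ : synDegree ord f < δ)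
    (hf : f ∈ degreeSpan ord M (Set.Iic δ)) : f ∈ degreeSpan ord M (Set.Iio δ) := by
  by_cases hex : ∃ h ∈ M, synDegree ord h = δ
  · obtain ⟨h, hh, rfl⟩ := hex
    obtain ⟨c, hc⟩ := hM.exists_sub_C_mul_mem hh hf
    have hfh : coeff (ord.degree h) f = 0 :=
      coeff_degree_eq_zero_of_mem_degreeSpan_Iio (M := {f}) (Submodule.subset_span ⟨rfl, hδ⟩)
    have hch : c * ord.leadingCoeff h = 0 := by
      simpa [hfh, coeff_C_mul] using coeff_degree_eq_zero_of_mem_degreeSpan_Iio hc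
    have h0 : h ≠ 0 := by
      rintro rfl
      exact not_lt_bot hδ
    obtain rfl := (mul_eq_zero.1 hch).resolve_right (ord.leadingCoeff_ne_zero_iff.2 h0)
    simpa using hc
  · refine Submodule.span_mono ?_ hf
    exact fun p hp => ⟨hp.1, lt_of_le_of_ne hp.2 fun h => hex ⟨p, hp.1, h⟩⟩

theorem SPolynomialsDescend.mem_degreeSpan_Iic_degree (hM : SPolynomialsDescend ord M)
    {f : MvPolynomial σ k} (hf : f ∈ Submodule.span k M) :
    f ∈ degreeSpan ord M (Set.Iic (synDegree ord f)) := by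
  obtain ⟨δ, -, hδ⟩ : ∃ δ ∈ Set.univ, f ∈ degreeSpan ord M (Set.Iic δ) :=
    exists_mem_degreeSpan_Iic Set.univ_nonempty (by simpa [degreeSpan] using hf)
  induction δ using WellFoundedLT.induction with
  | ind δ ih =>
    rcases le_or_gt δ (synDegree ord f) with hle | hlt
    · exact degreeSpan_mono (Set.Iic_subset_Iic.2 hle) hδ
    · obtain ⟨ε, hε, hfε⟩ :=
        exists_mem_degreeSpan_Iic ⟨_, Set.mem_Iio.2 hlt⟩ (hM.mem_degreeSpan_Iio hlt hδ)
      exact ih ε hε hfε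

end DegreeSpan

section LinearOrders

variable {β : Type*}

lemma bsle_iff_le [L : LinearOrder β] {a b : WithBot β} : bsle L a b ↔ a ≤ b := by
  induction a using WithBot.recBotCoe <;> induction b using WithBot.recBotCoe <;> simp [bsle]

lemma bsle_refl (L : LinearOrder β) (a : WithBot β) : bsle L a a :=
  bsle_iff_le.2 le_rfl

lemma bsle_bot (L : LinearOrder β) (a : WithBot β) : bsle L ⊥ a :=
  bsle_iff_le.2 bot_le

lemma bsle_trans {L : LinearOrder β} {a b c : WithBot β} (hab : bsle L a b) (hbc : bsle L b c) :
    bsle L a c :=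
  bsle_iff_le.2 ((bsle_iff_le.1 hab).trans (bsle_iff_le.1 hbc))

lemma bsle_total (L : LinearOrder β) (a b : WithBot β) : bsle L a b ∨ bsle L b a := by
  simpa only [bsle_iff_le] using le_total a b

lemma bsle_max_iff {L : LinearOrder β} {s : Finset β} {d : WithBot β} :
    bsle L (@Finset.max β L s) d ↔ ∀ b ∈ s, bsle L b d := by
  simp only [bsle_iff_le, Finset.max_le_iff]

lemma bsle_map {L : LinearOrder β} {φ ψ : β → β} (h : ∀ b, L.le (φ b) (ψ b)) (a : WithBot β) :
    bsle L (a.map φ) (a.map ψ) := by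
  induction a using WithBot.recBotCoe with
  | bot => exact bsle_refl L _
  | coe b => exact h b

lemma bsle_map_map {L : LinearOrder β} {φ : β → β} (h : ∀ a b, L.le a b → L.le (φ a) (φ b))
    {a b : WithBot β} (hab : bsle L a b) : bsle L (a.map φ) (b.map φ) := by
  have hφ : Monotone φ := fun a b => h a b
  exact bsle_iff_le.2 (hφ.withBot_map (bsle_iff_le.1 hab))

lemma finset_max_eq_coe_iff {L : LinearOrder β} {s : Finset β} {a : β} :
    @Finset.max β L s = a ↔ a ∈ s ∧ ∀ b ∈ s, L.le b a := by
  refine ⟨fun h => ⟨Finset.mem_of_max h, fun b hb => Finset.le_max_of_eq hb h⟩, fun ⟨ha, h⟩ => ?_⟩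
  exact le_antisymm (Finset.max_le fun b hb => WithBot.coe_le_coe.2 (h b hb)) (Finset.le_max ha)

end LinearOrders

section TermOrders

variable {σ ι : Type*}

/-- `L1` is a monomial order in the paper's sense: compatible with addition of exponents and
well-founded. -/
class IsMonomialOrder (L1 : LinearOrder (σ →₀ ℕ)) : Prop where
  add_lt_add_left : ∀ a b c : σ →₀ ℕ, L1.lt a b → L1.lt (a + c) (b + c)
  wellFounded_lt : WellFounded L1.lt

/-- `L2` is a module term order compatible with `L1`: multiplication by monomials preserves it,
and it extends `L1` on each component. -/
class IsModuleTermOrder (L1 : LinearOrder (σ →₀ ℕ)) (L2 : LinearOrder (ι × (σ →₀ ℕ))) :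
    Prop where
  add_lt_add_left : ∀ (p q : ι × (σ →₀ ℕ)) (γ : σ →₀ ℕ),
    L2.lt p q → L2.lt (p.1, p.2 + γ) (q.1, q.2 + γ)
  mk_lt_mk : ∀ (i : ι) (α β : σ →₀ ℕ), L1.lt α β → L2.lt (i, α) (i, β)

namespace IsMonomialOrder

variable (L1 : LinearOrder (σ →₀ ℕ)) [IsMonomialOrder L1]

lemma add_le_add_left {a b : σ →₀ ℕ} (h : L1.le a b) (c : σ →₀ ℕ) :
    L1.le (a + c) (b + c) :=
  @StrictMono.monotone _ _ L1.toPartialOrder L1.toPreorder (· + c)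
    (fun a b => add_lt_add_left a b c) a b h

-- An exponent `d < 0` would start the infinite descent `0 > d > d + d > ⋯`.
lemma zero_le (d : σ →₀ ℕ) : L1.le 0 d := by
  refine (@not_lt _ L1 _ _).1 ?_
  induction d using (wellFounded_lt (L1 := L1)).induction with
  | _ d ih =>
    intro hd
    have hdd : L1.lt (d + d) d := by
      simpa only [zero_add] using add_lt_add_left (L1 := L1) d 0 d hd
    exact ih _ hdd (@lt_trans _ L1.toPreorder _ _ _ hdd hd)

end IsMonomialOrder

/-- A monomial order of the paper as one of Mathlib's bundled monomial orders. -/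
noncomputable def monomialOrder (L1 : LinearOrder (σ →₀ ℕ)) [IsMonomialOrder L1] :
    MonomialOrder σ where
  syn := σ →₀ ℕ
  linearOrderSyn := L1
  isOrderedAddMonoid_syn :=
    @IsOrderedAddMonoid.mk _ _ L1.toPreorder
      (fun _ _ h c => IsMonomialOrder.add_le_add_left L1 h c)
      (fun a b h c => add_comm a c ▸ add_comm b c ▸ IsMonomialOrder.add_le_add_left L1 h c)
  toSyn := AddEquiv.refl _
  toSyn_monotone a b hab := by
    have h := IsMonomialOrder.add_le_add_left L1 (IsMonomialOrder.zero_le L1 (b - a)) a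
    rwa [zero_add, tsub_add_cancel_of_le hab] at h
  wellFoundedLT_syn := ⟨IsMonomialOrder.wellFounded_lt⟩

lemma bsle_iff_toWithBotSyn_le {L1 : LinearOrder (σ →₀ ℕ)} [IsMonomialOrder L1]
    {a b : WithBot (σ →₀ ℕ)} : bsle L1 a b ↔
      (monomialOrder L1).toWithBotSyn a ≤ (monomialOrder L1).toWithBotSyn b := by
  have h (x : WithBot (σ →₀ ℕ)) : (monomialOrder L1).toWithBotSyn x = x := congrFun WithBot.map_id x
  rw [h, h]
  exact bsle_iff_le

namespace IsModuleTermOrder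

lemma add_le_add_left (L1 : LinearOrder (σ →₀ ℕ)) {L2 : LinearOrder (ι × (σ →₀ ℕ))}
    [IsModuleTermOrder L1 L2] {p q : ι × (σ →₀ ℕ)} (h : L2.le p q) (γ : σ →₀ ℕ) :
    L2.le (p.1, p.2 + γ) (q.1, q.2 + γ) :=
  @StrictMono.monotone _ _ L2.toPartialOrder L2.toPreorder (fun p => (p.1, p.2 + γ))
    (fun p q => add_lt_add_left L1 p q γ) p q h

lemma mk_le_mk {L1 : LinearOrder (σ →₀ ℕ)} {L2 : LinearOrder (ι × (σ →₀ ℕ))}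
    [IsModuleTermOrder L1 L2] (i : ι) {α β : σ →₀ ℕ} (h : L1.le α β) : L2.le (i, α) (i, β) :=
  @StrictMono.monotone _ _ L1.toPartialOrder L2.toPreorder (Prod.mk i) (mk_lt_mk i) α β h

end IsModuleTermOrder

end TermOrders

section LeadingData

variable {k : Type*} [Field k] {n : ℕ} (L1 : LinearOrder (Fin n →₀ ℕ)) [IsMonomialOrder L1]

lemma lpp_eq_withBotDegree (f : MvPolynomial (Fin n) k) :
    lpp L1 f = (monomialOrder L1).withBotDegree f := by
  rcases eq_or_ne f 0 with rfl | hf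
  · rfl
  rw [((monomialOrder L1).withBotDegree_eq_coe_degree_iff f).2 hf]
  exact finset_max_eq_coe_iff.2
    ⟨(monomialOrder L1).degree_mem_support hf, fun _ => (monomialOrder L1).le_degree⟩

lemma lpp_eq_coe_degree {f : MvPolynomial (Fin n) k} (hf : f ≠ 0) :
    lpp L1 f = (monomialOrder L1).degree f :=
  (lpp_eq_withBotDegree L1 f).trans (((monomialOrder L1).withBotDegree_eq_coe_degree_iff f).2 hf)

lemma plc_eq_leadingCoeff {f : MvPolynomial (Fin n) k} (hf : f ≠ 0) :
    plc L1 f = (monomialOrder L1).leadingCoeff f := by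
  rw [plc, lpp_eq_coe_degree L1 hf]
  rfl

end LeadingData

lemma mlcm_eq_sup {n : ℕ} (α β : Fin n →₀ ℕ) : mlcm α β = α ⊔ β :=
  Finsupp.ext fun _ => rfl

section Signature

variable {k : Type*} [Field k] {m n : ℕ} {L1 : LinearOrder (Fin n →₀ ℕ)}
  {L2 : LinearOrder (Fin m × (Fin n →₀ ℕ))} {u v w : Fin m → MvPolynomial (Fin n) k}

lemma mem_msupport {q : Fin m × (Fin n →₀ ℕ)} : q ∈ msupport u ↔ coeff q.2 (u q.1) ≠ 0 := by
  obtain ⟨i, α⟩ := q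
  simp [msupport]

lemma sig_eq_coe_iff {q : Fin m × (Fin n →₀ ℕ)} :
    sig L2 u = q ↔ q ∈ msupport u ∧ ∀ r ∈ msupport u, L2.le r q :=
  finset_max_eq_coe_iff

lemma sig_eq_bot_iff : sig L2 u = ⊥ ↔ u = 0 := by
  rw [sig, Finset.max_eq_bot, Finset.eq_empty_iff_forall_notMem]
  simp [mem_msupport, funext_iff, MvPolynomial.ext_iff]

lemma bsle_sig_sub_C_mul {d : WithBot (Fin m × (Fin n →₀ ℕ))} (c : k) (hu : bsle L2 (sig L2 u) d)
    (hv : bsle L2 (sig L2 v) d) : bsle L2 (sig L2 fun j => u j - C c * v j) d := by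
  refine bsle_max_iff.2 fun q hq => ?_
  by_cases hqu : q ∈ msupport u
  · exact bsle_max_iff.1 hu q hqu
  · refine bsle_max_iff.1 hv q (mem_msupport.2 fun hqv => mem_msupport.1 hq ?_)
    rw [coeff_sub, coeff_C_mul, hqv, not_not.1 (mt mem_msupport.2 hqu), mul_zero, sub_zero]

variable [IsMonomialOrder L1]

lemma mk_degree_mem_msupport {i : Fin m} (hv : v i ≠ 0) :
    (i, (monomialOrder L1).degree (v i)) ∈ msupport v :=
  mem_msupport.2 (mem_support_iff.1 ((monomialOrder L1).degree_mem_support hv))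

variable [IsModuleTermOrder L1 L2]

lemma degree_eq_of_sig_eq_coe {q : Fin m × (Fin n →₀ ℕ)} (hv : sig L2 v = q) :
    (monomialOrder L1).degree (v q.1) = q.2 := by
  obtain ⟨hq, hmax⟩ := sig_eq_coe_iff.1 hv
  have hsupp : q.2 ∈ (v q.1).support := mem_support_iff.2 (mem_msupport.1 hq)
  have hle : L2.le (q.1, q.2) (q.1, (monomialOrder L1).degree (v q.1)) :=
    IsModuleTermOrder.mk_le_mk q.1 ((monomialOrder L1).le_degree hsupp)
  have hge := hmax _ (mk_degree_mem_msupport (L1 := L1) (ne_zero_iff.2 ⟨_, mem_msupport.1 hq⟩))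
  exact congrArg Prod.snd (L2.le_antisymm _ _ hge hle)

lemma sig_smul {p : MvPolynomial (Fin n) k} (hp : p ≠ 0) (v : Fin m → MvPolynomial (Fin n) k) :
    sig L2 (p • v) = (sig L2 v).map fun q => (q.1, q.2 + (monomialOrder L1).degree p) := by
  induction hv : sig L2 v using WithBot.recBotCoe with
  | bot => rw [sig_eq_bot_iff.1 hv, smul_zero, sig_eq_bot_iff.2 rfl, WithBot.map_bot]
  | coe q =>
    obtain ⟨hq, hmax⟩ := sig_eq_coe_iff.1 hv
    refine sig_eq_coe_iff.2 ⟨mem_msupport.2 ?_, fun r hr => ?_⟩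
    · have hvq : v q.1 ≠ 0 := ne_zero_iff.2 ⟨_, mem_msupport.1 hq⟩
      dsimp only [Pi.smul_apply, smul_eq_mul]
      rw [← degree_eq_of_sig_eq_coe (L1 := L1) hv, add_comm,
        (monomialOrder L1).coeff_mul_of_degree_add]
      exact mul_ne_zero ((monomialOrder L1).leadingCoeff_ne_zero_iff.2 hp)
        ((monomialOrder L1).leadingCoeff_ne_zero_iff.2 hvq)
    · have hpv : p * v r.1 ≠ 0 := ne_zero_iff.2 ⟨_, mem_msupport.1 hr⟩
      have hvr : v r.1 ≠ 0 := right_ne_zero_of_mul hpv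
      have hdeg : L1.le r.2 ((monomialOrder L1).degree (v r.1) + (monomialOrder L1).degree p) := by
        rw [add_comm, ← (monomialOrder L1).degree_mul hp hvr]
        exact (monomialOrder L1).le_degree (mem_support_iff.2 (mem_msupport.1 hr))
      exact L2.le_trans _ _ _ (IsModuleTermOrder.mk_le_mk r.1 hdeg)
        (IsModuleTermOrder.add_le_add_left L1 (hmax _ (mk_degree_mem_msupport hvr)) _)

variable (L1)

include L1

lemma bsle_sig_smul_of_synDegree_le {p q : MvPolynomial (Fin n) k}
    (h : synDegree (monomialOrder L1) p ≤ synDegree (monomialOrder L1) q)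
    (v : Fin m → MvPolynomial (Fin n) k) : bsle L2 (sig L2 (p • v)) (sig L2 (q • v)) := by
  obtain ⟨hdeg, hzero⟩ := ((monomialOrder L1).withBotDegree_le_withBotDegree_iff p q).1 h
  rcases eq_or_ne p 0 with rfl | hp
  · rw [zero_smul, sig_eq_bot_iff.2 rfl]
    exact bsle_bot L2 _
  rw [sig_smul (L1 := L1) hp, sig_smul (L1 := L1) (mt hzero hp)]
  refine bsle_map (fun r => ?_) _
  rw [add_comm r.2, add_comm r.2]
  exact IsModuleTermOrder.mk_le_mk r.1 (IsMonomialOrder.add_le_add_left L1 hdeg r.2)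

lemma bsle_sig_tsmul {p : MvPolynomial (Fin n) k} {t : Fin n →₀ ℕ} (ht : t ∈ p.support)
    (v : Fin m → MvPolynomial (Fin n) k) : bsle L2 (sig L2 (tsmul t v)) (sig L2 (p • v)) :=
  bsle_sig_smul_of_synDegree_le L1 (synDegree_monomial_le_of_mem_support ht 1) v

lemma bsle_sig_monomial_smul (t : Fin n →₀ ℕ) (c : k) (v : Fin m → MvPolynomial (Fin n) k) :
    bsle L2 (sig L2 (monomial t c • v)) (sig L2 (tsmul t v)) :=
  bsle_sig_smul_of_synDegree_le L1
    (synDegree_monomial_le_of_mem_support (mem_support_iff.2 (by simp)) c) v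

lemma bsle_sig_smul {p : MvPolynomial (Fin n) k} (hp : p ≠ 0)
    (v : Fin m → MvPolynomial (Fin n) k) : bsle L2 (sig L2 v) (sig L2 (p • v)) := by
  have h := bsle_sig_smul_of_synDegree_le (L2 := L2) L1 (p := 1) (q := p) ?_ v
  · rwa [one_smul] at h
  · rw [(monomialOrder L1).withBotDegree_le_withBotDegree_iff_of_ne_zero _ hp,
      (monomialOrder L1).degree_one, map_zero]
    exact (monomialOrder L1).zero_le _

lemma bsle_sig_smul_smul (p : MvPolynomial (Fin n) k) (h : bsle L2 (sig L2 v) (sig L2 w)) :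
    bsle L2 (sig L2 (p • v)) (sig L2 (p • w)) := by
  rcases eq_or_ne p 0 with rfl | hp
  · rw [zero_smul, zero_smul]
    exact bsle_refl L2 _
  · rw [sig_smul (L1 := L1) hp, sig_smul (L1 := L1) hp]
    exact bsle_map_map (fun _ _ hab => IsModuleTermOrder.add_le_add_left L1 hab _) h

end Signature

section StandardRepresentation

variable {k : Type*} [Field k] {m n : ℕ} (L1 : LinearOrder (Fin n →₀ ℕ))
  (L2 : LinearOrder (Fin m × (Fin n →₀ ℕ)))
  (G : Set (MvPolynomial (Fin n) k × (Fin m → MvPolynomial (Fin n) k)))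
  (S : WithBot (Fin m × (Fin n →₀ ℕ)))

/-- The monomial multiples `x^t g` of the labeled polynomials `g^[v] ∈ G` whose signature
`s(x^t v)` is at most `S`. -/
def sigMultiples : Set (MvPolynomial (Fin n) k) :=
  {h | ∃ gv ∈ G, ∃ t, h = monomial t 1 * gv.1 ∧ bsle L2 (sig L2 (tsmul t gv.2)) S}

/-- Every critical pair of elements of `G` with signature at most `S` has an S-polynomial with a
standard representation w.r.t. `G`. -/
def CriticalPairsHaveStdReps : Prop :=
  ∀ gv ∈ G, ∀ hw ∈ G, gv.1 ≠ 0 → hw.1 ≠ 0 → ∀ γ δ : Fin n →₀ ℕ,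
    lpp L1 gv.1 = γ → lpp L1 hw.1 = δ →
    bsle L2 (sig L2 (tsmul (mlcm γ δ - δ) hw.2)) (sig L2 (tsmul (mlcm γ δ - γ) gv.2)) →
    bsle L2 (sig L2 (tsmul (mlcm γ δ - γ) gv.2)) S →
    HasStdRep L1 L2 G (spolyP L1 gv hw (mlcm γ δ - γ) (mlcm γ δ - δ))
      (spolyV L1 gv hw (mlcm γ δ - γ) (mlcm γ δ - δ))

variable {L1 L2 G S} {f p : MvPolynomial (Fin n) k} {u : Fin m → MvPolynomial (Fin n) k}
  {gv hw : MvPolynomial (Fin n) k × (Fin m → MvPolynomial (Fin n) k)} {s t : Fin n →₀ ℕ}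

lemma tsmul_add (s t : Fin n →₀ ℕ) (v : Fin m → MvPolynomial (Fin n) k) :
    tsmul (s + t) v = tsmul s (tsmul t v) := by
  funext i
  simp only [tsmul, ← mul_assoc, monomial_mul, mul_one]

lemma bsle_sig_spolyV (h : bsle L2 (sig L2 (tsmul t hw.2)) (sig L2 (tsmul s gv.2))) :
    bsle L2 (sig L2 (spolyV L1 gv hw s t)) (sig L2 (tsmul s gv.2)) :=
  bsle_sig_sub_C_mul _ (bsle_refl L2 _) h

variable [IsMonomialOrder L1] [IsModuleTermOrder L1 L2] {δ : WithBot (monomialOrder L1).syn}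

lemma hasStdRep_of_mem_degreeSpan
    (hf : f ∈ degreeSpan (monomialOrder L1) (sigMultiples L2 G (sig L2 u))
      (Set.Iic (synDegree (monomialOrder L1) f))) :
    HasStdRep L1 L2 G f u := by
  obtain ⟨N, c, h, hsum⟩ := Submodule.mem_span_set'.1 hf
  choose gv hgv t hh hsig using fun i => (h i).2.1
  have hterm (i : Fin N) :
      monomial (t i) (c i) * (gv i).1 = c i • (h i : MvPolynomial (Fin n) k) := by
    rw [hh, ← smul_mul_assoc, smul_monomial, smul_eq_mul, mul_one]
  refine ⟨N, fun i => monomial (t i) (c i), gv, hgv, ?_, fun i => ?_, fun i => ?_⟩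
  · simp only [hterm, hsum]
  · rw [hterm, lpp_eq_withBotDegree, lpp_eq_withBotDegree, bsle_iff_toWithBotSyn_le]
    exact ((monomialOrder L1).withBotDegree_le_withBotDegree_of_support_subset support_smul).trans
      (h i).2.2
  · exact bsle_trans (bsle_sig_monomial_smul L1 (t i) (c i) (gv i).2) (hsig i)

lemma mul_fst_mem_degreeSpan (hgv : gv ∈ G) (hS : bsle L2 (sig L2 (p • gv.2)) S)
    (hδ : synDegree (monomialOrder L1) (p * gv.1) ≤ δ) :
    p * gv.1 ∈ degreeSpan (monomialOrder L1) (sigMultiples L2 G S) (Set.Iic δ) := by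
  have hexpand : p * gv.1 = ∑ t ∈ p.support, coeff t p • (monomial t 1 * gv.1) := by
    simp only [← smul_mul_assoc, smul_monomial, smul_eq_mul, mul_one, ← Finset.sum_mul,
      ← p.as_sum]
  rw [hexpand]
  refine Submodule.sum_mem _ fun t ht => Submodule.smul_mem _ _ (Submodule.subset_span ?_)
  refine ⟨⟨gv, hgv, t, rfl, bsle_trans (bsle_sig_tsmul L1 ht gv.2) hS⟩, le_trans ?_ hδ⟩
  have hdeg := synDegree_monomial_le_of_mem_support (ord := monomialOrder L1) ht 1
  simp only [synDegree, MonomialOrder.withBotDegree_mul, map_add] at hdeg ⊢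
  gcongr

lemma HasStdRep.mul_mem_degreeSpan (h : HasStdRep L1 L2 G f u) (hS : bsle L2 (sig L2 (p • u)) S)
    (hδ : synDegree (monomialOrder L1) (p * f) ≤ δ) :
    p * f ∈ degreeSpan (monomialOrder L1) (sigMultiples L2 G S) (Set.Iic δ) := by
  obtain ⟨N, q, g, hg, hf, hlpp, hsig⟩ := h
  have hexpand : p * f = ∑ i, p * q i * (g i).1 := by
    simp only [hf, Finset.mul_sum, mul_assoc]
  rw [hexpand]
  refine Submodule.sum_mem _ fun i _ => mul_fst_mem_degreeSpan (hg i) ?_ (le_trans ?_ hδ)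
  · rw [mul_smul]
    exact bsle_trans (bsle_sig_smul_smul L1 p (hsig i)) hS
  · have hdeg : synDegree (monomialOrder L1) (q i * (g i).1) ≤ synDegree (monomialOrder L1) f := by
      simpa only [lpp_eq_withBotDegree] using bsle_iff_toWithBotSyn_le.1 (hlpp i)
    rw [mul_assoc]
    simp only [synDegree, MonomialOrder.withBotDegree_mul, map_add] at hdeg ⊢
    gcongr

lemma sPolynomial_eq_C_mul_spolyP (hg : gv.1 ≠ 0) (hh : hw.1 ≠ 0) :
    (monomialOrder L1).sPolynomial gv.1 hw.1 = C ((monomialOrder L1).leadingCoeff hw.1) *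
      spolyP L1 gv hw
        ((monomialOrder L1).degree gv.1 ⊔ (monomialOrder L1).degree hw.1 -
          (monomialOrder L1).degree gv.1)
        ((monomialOrder L1).degree gv.1 ⊔ (monomialOrder L1).degree hw.1 -
          (monomialOrder L1).degree hw.1) := by
  have hlc := (monomialOrder L1).leadingCoeff_ne_zero_iff.2 hh
  rw [spolyP, plc_eq_leadingCoeff L1 hg, plc_eq_leadingCoeff L1 hh,
    (monomialOrder L1).sPolynomial_def, mul_sub, ← mul_assoc, ← mul_assoc, ← mul_assoc, ← C_mul,
    mul_div_cancel₀ _ hlc, C_mul_monomial, C_mul_monomial, mul_one, mul_one]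

lemma CriticalPairsHaveStdReps.sPolynomial_monomial_mul_mem
    (hcrit : CriticalPairsHaveStdReps L1 L2 G S)
    (hgv : gv ∈ G) (hhw : hw ∈ G) (hg : gv.1 ≠ 0) (hh : hw.1 ≠ 0)
    (hdeg : s + (monomialOrder L1).degree gv.1 = t + (monomialOrder L1).degree hw.1)
    (hS : bsle L2 (sig L2 (tsmul s gv.2)) S) {τ : Fin n →₀ ℕ}
    (hτ : τ = (monomialOrder L1).degree gv.1 ⊔ (monomialOrder L1).degree hw.1)
    (horient : bsle L2 (sig L2 (tsmul (τ - (monomialOrder L1).degree hw.1) hw.2))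
      (sig L2 (tsmul (τ - (monomialOrder L1).degree gv.1) gv.2))) :
    (monomialOrder L1).sPolynomial (monomial s 1 * gv.1) (monomial t 1 * hw.1) ∈
      degreeSpan (monomialOrder L1) (sigMultiples L2 G S)
        (Set.Iic (synDegree (monomialOrder L1)
          ((monomialOrder L1).sPolynomial (monomial s 1 * gv.1) (monomial t 1 * hw.1)))) := by
  obtain ⟨ε, hε⟩ : ∃ ε, s + (monomialOrder L1).degree gv.1 = ε + τ := by
    refine ⟨_, (tsub_add_cancel_of_le (hτ ▸ sup_le le_add_self ?_)).symm⟩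
    exact hdeg ▸ le_add_self
  have hs : s = ε + (τ - (monomialOrder L1).degree gv.1) := by
    rw [← add_tsub_assoc_of_le (hτ ▸ le_sup_left), ← hε, add_tsub_cancel_right]
  have hfactor :
      (monomialOrder L1).sPolynomial (monomial s 1 * gv.1) (monomial t 1 * hw.1) =
        monomial ε ((monomialOrder L1).leadingCoeff hw.1) *
          spolyP L1 gv hw (τ - (monomialOrder L1).degree gv.1)
            (τ - (monomialOrder L1).degree hw.1) := by
    rw [(monomialOrder L1).sPolynomial_monomial_mul, ← hdeg, sup_idem, ← hτ, hε,
      add_tsub_cancel_right, sPolynomial_eq_C_mul_spolyP hg hh, ← hτ, ← mul_assoc, mul_comm _ (C _),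
      C_mul_monomial, mul_one, mul_one]
  have hbound (c : k) :
      bsle L2 (sig L2 (monomial ε c • tsmul (τ - (monomialOrder L1).degree gv.1) gv.2)) S := by
    refine bsle_trans (bsle_sig_monomial_smul L1 ε c _) ?_
    rwa [← tsmul_add, ← hs]
  rw [hfactor]
  refine HasStdRep.mul_mem_degreeSpan
    (u := spolyV L1 gv hw (τ - (monomialOrder L1).degree gv.1)
      (τ - (monomialOrder L1).degree hw.1)) ?_ ?_ le_rfl
  · rw [← mlcm_eq_sup] at hτ
    subst hτ
    refine hcrit gv hgv hw hhw hg hh _ _ (lpp_eq_coe_degree L1 hg) (lpp_eq_coe_degree L1 hh)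
      horient (bsle_trans (bsle_sig_smul L1 ?_ _) (hbound 1))
    exact monomial_eq_zero.not.2 one_ne_zero
  · exact bsle_trans (bsle_sig_smul_smul L1 _ (bsle_sig_spolyV horient)) (hbound _)

lemma CriticalPairsHaveStdReps.sPolynomialsDescend (hcrit : CriticalPairsHaveStdReps L1 L2 G S) :
    SPolynomialsDescend (monomialOrder L1) (sigMultiples L2 G S) := by
  rintro _ ⟨gv, hgv, s, rfl, hgS⟩ _ ⟨hw, hhw, t, rfl, hhS⟩ hg hh hdeg
  have hg1 : gv.1 ≠ 0 := right_ne_zero_of_mul hg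
  have hh1 : hw.1 ≠ 0 := right_ne_zero_of_mul hh
  refine degreeSpan_mono (Set.Iic_subset_Iio.2 (synDegree_sPolynomial_lt hg hdeg)) ?_
  classical
  rw [(monomialOrder L1).degree_mul (left_ne_zero_of_mul hg) hg1,
    (monomialOrder L1).degree_mul (left_ne_zero_of_mul hh) hh1,
    (monomialOrder L1).degree_monomial, (monomialOrder L1).degree_monomial,
    if_neg one_ne_zero, if_neg one_ne_zero] at hdeg
  rcases bsle_total L2
    (sig L2 (tsmul ((monomialOrder L1).degree gv.1 ⊔ (monomialOrder L1).degree hw.1 -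
      (monomialOrder L1).degree hw.1) hw.2))
    (sig L2 (tsmul ((monomialOrder L1).degree gv.1 ⊔ (monomialOrder L1).degree hw.1 -
      (monomialOrder L1).degree gv.1) gv.2)) with horient | horient
  · exact hcrit.sPolynomial_monomial_mul_mem hgv hhw hg1 hh1 hdeg hgS rfl horient
  · rw [(monomialOrder L1).sPolynomial_antisymm, synDegree, (monomialOrder L1).withBotDegree_neg]
    exact neg_mem (hcrit.sPolynomial_monomial_mul_mem hhw hgv hh1 hg1 hdeg.symm hhS
      (sup_comm _ _) horient)

theorem std_rep_from_spolys_general (hcrit : CriticalPairsHaveStdReps L1 L2 G (sig L2 u))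
    (hf : f ∈ Submodule.span k (sigMultiples L2 G (sig L2 u))) : HasStdRep L1 L2 G f u :=
  hasStdRep_of_mem_degreeSpan (hcrit.sPolynomialsDescend.mem_degreeSpan_Iic_degree hf)

variable (L1) in
include L1 in
lemma dotf_mem_span_sigMultiples {fvec : Fin m → MvPolynomial (Fin n) k}
    (hG : ∀ i, (fvec i, Pi.single i 1) ∈ G) :
    dotf fvec u ∈ Submodule.span k (sigMultiples L2 G (sig L2 u)) := by
  refine Submodule.sum_mem _ fun i _ => Submodule.span_mono (fun _ hp => hp.1)
    (mul_fst_mem_degreeSpan (L1 := L1) (gv := (fvec i, Pi.single i 1)) (hG i) ?_ le_rfl)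
  refine bsle_max_iff.2 fun q hq => bsle_max_iff.1 (bsle_refl L2 _) q (mem_msupport.2 ?_)
  have hcoeff := mem_msupport.1 hq
  obtain ⟨j, α⟩ := q
  rcases eq_or_ne j i with rfl | hji
  · simpa using hcoeff
  · simp [hji] at hcoeff

end StandardRepresentation

/-- If every S-polynomial of a critical pair of elements of `G` whose (bigger) component
`x^{t_g}·(g^[v])` has signature `⪯₂ s(u)` has a standard representation w.r.t. `G`,
then the labeled polynomial `f^[u]` has a standard representation w.r.t. `G`.
(Here `G` is a finite set of labeled polynomials containing every `fᵢ^[eᵢ]`.) -/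
theorem std_rep_from_spolys (k : Type*) [Field k] (n m : ℕ)
    (L1 : LinearOrder (Fin n →₀ ℕ)) (L2 : LinearOrder (Fin m × (Fin n →₀ ℕ)))
    (h1add : ∀ a b c : Fin n →₀ ℕ, L1.lt a b → L1.lt (a + c) (b + c))
    (h1wf : WellFounded L1.lt)
    (h2add : ∀ (p q : Fin m × (Fin n →₀ ℕ)) (γ : Fin n →₀ ℕ),
      L2.lt p q → L2.lt (p.1, p.2 + γ) (q.1, q.2 + γ))
    (h21 : ∀ (i : Fin m) (α β : Fin n →₀ ℕ), L1.lt α β → L2.lt (i, α) (i, β))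
    (fvec : Fin m → MvPolynomial (Fin n) k)
    (G : Finset (MvPolynomial (Fin n) k × (Fin m → MvPolynomial (Fin n) k)))
    (hGlabeled : ∀ p ∈ G, p.1 = dotf fvec p.2)
    (hGe : ∀ i : Fin m,
      (fvec i, (Pi.single i (1 : MvPolynomial (Fin n) k) :
        Fin m → MvPolynomial (Fin n) k)) ∈ G)
    (f : MvPolynomial (Fin n) k) (u : Fin m → MvPolynomial (Fin n) k)
    (hf : f = dotf fvec u)
    (hcrit : ∀ gv ∈ G, ∀ hw ∈ G, gv.1 ≠ 0 → hw.1 ≠ 0 →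
      ∀ γ δ : Fin n →₀ ℕ,
        lpp L1 gv.1 = (γ : WithBot (Fin n →₀ ℕ)) →
        lpp L1 hw.1 = (δ : WithBot (Fin n →₀ ℕ)) →
        -- orientation: `(x^{t_g}, gv, x^{t_h}, hw)` is the critical pair
        bsle L2 (sig L2 (tsmul (mlcm γ δ - δ) hw.2)) (sig L2 (tsmul (mlcm γ δ - γ) gv.2)) →
        -- signature bound: `s(x^{t_g} v) ⪯₂ s(u)`
        bsle L2 (sig L2 (tsmul (mlcm γ δ - γ) gv.2)) (sig L2 u) →
        HasStdRep L1 L2 (↑G) (spolyP L1 gv hw (mlcm γ δ - γ) (mlcm γ δ - δ))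
          (spolyV L1 gv hw (mlcm γ δ - γ) (mlcm γ δ - δ))) :
    HasStdRep L1 L2 (↑G) f u := by
  have : IsMonomialOrder L1 := ⟨h1add, h1wf⟩
  have : IsModuleTermOrder L1 L2 := ⟨h2add, h21⟩
  exact std_rep_from_spolys_general hcrit (hf ▸ dotf_mem_span_sigMultiples L1 hGe)
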